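/- Let X = Spec(B) be given by a local presentation attached to the multiplicity as in the context, with elimination algebra G_X^{(d)} over S and closed point ξ. Then there exist a field extension K of k and an arc φ : B → K[[t]] in X through ξ (with all φ(θ_i) and φ(z_j) nonzero) such that r_{X,φ}/ord(φ) = ord(G_X^{(d)}). -/

import Mathlib

open Polynomial
open scoped ENNReal

noncomputable section

namespace NashMult

/-- The `m`-adic order `ν(f)` of an element `f` of a ring: the largest `n` with `f ∈ m ^ n`. -/
def adicOrder {R : Type*} [CommRing R] (m : Ideal R) (f : R) : ℕ :=
  sSup {n : ℕ | f ∈ m ^ n}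

/-- A subalgebra `G ⊆ R[W]` is *graded* if it is spanned by its "monomials", i.e. it is closed
under taking homogeneous components.  This is the condition expressing that `G = ⊕ I_l W^l`
for a family of ideals `I_l` (with `I_0 = R` and `I_i · I_j ⊆ I_{i+j}` automatic). -/
def Graded {R : Type*} [CommRing R] (G : Subalgebra R (Polynomial R)) : Prop :=
  ∀ p ∈ G, ∀ n : ℕ, (C (p.coeff n) * X ^ n : Polynomial R) ∈ G

/-- A *Rees algebra* over `R`: a finitely generated graded subalgebra of `R[W]`. -/
def IsReesAlgebra {R : Type*} [CommRing R] (G : Subalgebra R (Polynomial R)) : Prop :=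
  G.FG ∧ Graded G

/-- The order of (the Rees algebra) `G` at the closed point of the local ring `(R, m)`:
`ord(G) = inf { ν(f)/n : f W^n a homogeneous element of G, n ≥ 1, f ≠ 0 }`
(with value `∞` for the empty infimum). -/
def reesOrder {R : Type*} [CommRing R] (m : Ideal R) (G : Subalgebra R (Polynomial R)) : ℝ≥0∞ :=
  sInf {q : ℝ≥0∞ | ∃ (f : R) (n : ℕ), f ≠ 0 ∧ 1 ≤ n ∧ (C f * X ^ n : Polynomial R) ∈ G ∧
    q = (adicOrder m f : ℝ≥0∞) / (n : ℝ≥0∞)}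

/-- `G = ⊕ I_l W^l` is *differentially closed* relative to a family `D` of derivations if
`I_{l+1} ⊆ I_l` and `D_j (I_l) ⊆ I_{l-1}` for all `l ≥ 1` and all `j`. -/
def DiffClosed {k R ι : Type*} [CommRing k] [CommRing R] [Algebra k R]
    (D : ι → Derivation k R R) (G : Subalgebra R (Polynomial R)) : Prop :=
  (∀ (f : R) (l : ℕ), 1 ≤ l → (C f * X ^ (l + 1) : Polynomial R) ∈ G →
      (C f * X ^ l : Polynomial R) ∈ G) ∧
  (∀ (f : R) (l : ℕ) (j : ι), (C f * X ^ (l + 1) : Polynomial R) ∈ G →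
      (C (D j f) * X ^ l : Polynomial R) ∈ G)

/-- `Diff(M)`: the smallest graded differentially closed subalgebra of `R[W]` containing the
set `M`. -/
def diffClosure {k R ι : Type*} [CommRing k] [CommRing R] [Algebra k R]
    (D : ι → Derivation k R R) (M : Set (Polynomial R)) : Subalgebra R (Polynomial R) :=
  sInf {G : Subalgebra R (Polynomial R) | M ⊆ ↑G ∧ Graded G ∧ DiffClosed D G}

/-- The image `ψ(G)` of a Rees algebra `G` over `R` under a homomorphism (arc) `ψ : R → K⟦t⟧`:
the Rees algebra over `K⟦t⟧` generated by all `ψ(g) W^l` for `g W^l` a homogeneous element of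
`G` with `ψ(g) ≠ 0`. -/
def arcImage {R A : Type*} [CommRing R] [CommRing A] (ψ : R → A)
    (G : Subalgebra R (Polynomial R)) : Subalgebra A (Polynomial A) :=
  Algebra.adjoin A {p : Polynomial A | ∃ (g : R) (l : ℕ),
    (C g * X ^ l : Polynomial R) ∈ G ∧ ψ g ≠ 0 ∧ p = C (ψ g) * X ^ l}

/-- The order `ord(ψ)` of an arc `ψ : R → K⟦t⟧`: the largest `n` such that
`ψ(m) ⊆ t^n` (`t` being the ideal `tI`). -/
def homOrd {R A : Type*} [CommRing R] [CommRing A] (m : Ideal R) (tI : Ideal A)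
    (ψ : R → A) : ℕ :=
  sSup {n : ℕ | ∀ s ∈ m, ψ s ∈ tI ^ n}

/-- The maximal ideal `(t)` of `K⟦t⟧`. -/
def tId (K : Type*) [CommRing K] : Ideal (PowerSeries K) :=
  Ideal.span {(PowerSeries.X : PowerSeries K)}

/-- The `t`-adic order on `K⟦t⟧`. -/
def tOrd {K : Type*} [CommRing K] (g : PowerSeries K) : ℕ :=
  adicOrder (tId K) g

/-- The family of ideals `I_l` of the graded algebra `G = ⊕ I_l W^l`. -/
def idealFam {R : Type*} [CommRing R] (G : Subalgebra R (Polynomial R)) (l : ℕ) : Ideal R :=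
  Submodule.comap (Polynomial.monomial l : R →ₗ[R] Polynomial R) (Subalgebra.toSubmodule G)

/-- The closed point of the local ring `(R, m)` belongs to the singular locus of
`G = ⊕ I_l W^l`, i.e. `ν(I_l) ≥ l` for all `l ≥ 1`. -/
def SingFam {R : Type*} [CommRing R] (m : Ideal R) (I : ℕ → Ideal R) : Prop :=
  ∀ l : ℕ, 1 ≤ l → I l ≤ m ^ l

/-- The transform `⊕ (I_l · T^{-l}) W^l` of a Rees algebra `⊕ I_l W^l` over a DVR with
uniformizer `T` (when the closed point lies in the singular locus, `I_l ⊆ (T^l)` and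
`I_l · T^{-l} = (I_l : (T^l))`). -/
def transformFam {R : Type*} [CommRing R] (T : R) (I : ℕ → Ideal R) : ℕ → Ideal R :=
  fun l => (I l).colon (Ideal.span {T ^ l})

/-- The persistance: the least number `κ` of transforms needed so that the closed point no
longer lies in the singular locus. -/
def persist {R : Type*} [CommRing R] (m : Ideal R) (T : R)
    (G : Subalgebra R (Polynomial R)) : ℕ :=
  sInf {κ : ℕ | ¬ SingFam m ((transformFam T)^[κ] (idealFam G))}

/-- The set of elements of a ring integral over a subset `s` (monic equation with
coefficients in `s`). -/
def intClos {A : Type*} [CommRing A] (s : Set A) : Set A :=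
  {p : A | ∃ q : Polynomial A, q.Monic ∧ (∀ n, q.coeff n ∈ s) ∧ Polynomial.eval p q = 0}


/-- The monic polynomial `f = x^b + B_{b-2} x^{b-2} + ⋯ + B_1 x + B_0` with coefficients
`B_j = Bc j` (only `j ≤ b - 2` is relevant). -/
def minPolyOf {S : Type*} [CommRing S] (b : ℕ) (Bc : ℕ → S) : Polynomial S :=
  Polynomial.X ^ b + ∑ j ∈ Finset.range (b - 1), Polynomial.C (Bc j) * Polynomial.X ^ j


/-- The maximal ideal `(z_1, …, z_d)` of the polynomial ring `k[z_1, …, z_d]`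
(the kernel of evaluation at the origin). -/
def mPoly (k : Type) [Field k] (d : ℕ) : Ideal (MvPolynomial (Fin d) k) :=
  RingHom.ker (MvPolynomial.aeval (fun _ => (0 : k)) : MvPolynomial (Fin d) k →ₐ[k] k)

instance {k : Type} [Field k] {d : ℕ} : (mPoly k d).IsMaximal :=
  RingHom.ker_isMaximal_of_surjective _ (fun a => ⟨MvPolynomial.C a, by simp⟩)

instance {k : Type} [Field k] {d : ℕ} : (mPoly k d).IsPrime :=
  (inferInstance : (mPoly k d).IsMaximal).isPrime

/-- `IsSLoc k d S` says that `S` is (identified with) the localization of `k[z_1, …, z_d]`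
at the maximal ideal `(z_1, …, z_d)`. -/
abbrev IsSLoc (k : Type) [Field k] (d : ℕ) (S : Type) [CommRing S]
    [Algebra (MvPolynomial (Fin d) k) S] : Prop :=
  IsLocalization.AtPrime S (mPoly k d)

/-- The element `z_j` of `S`. -/
def zvar (k : Type) [Field k] (d : ℕ) (S : Type) [CommRing S]
    [Algebra (MvPolynomial (Fin d) k) S] (j : Fin d) : S :=
  algebraMap (MvPolynomial (Fin d) k) S (MvPolynomial.X j)

/-- The maximal ideal `m = (z_1, …, z_d)` of the local ring `S`. -/
def mS (k : Type) [Field k] (d : ℕ) (S : Type) [CommRing S]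
    [Algebra (MvPolynomial (Fin d) k) S] : Ideal S :=
  (mPoly k d).map (algebraMap (MvPolynomial (Fin d) k) S)


variable (k : Type) [Field k] (d : ℕ)
variable (S : Type) [CommRing S] [Algebra (MvPolynomial (Fin d) k) S] [Algebra k S]

/-- A local presentation, attached to the multiplicity, of a `d`-dimensional variety
`X = Spec B` at the closed point `ξ`:  `B = S[x_1,…,x_{n-d}]/I` with `I` prime,
`S → B` injective and finite, and the minimal polynomial over `Frac S` of the class `θ_i`
of `x_i` is `f_i = x_i^{b_i} + B_{i,b_i-2} x_i^{b_i-2} + ⋯ + B_{i,0}` with `b_i ≥ 2`,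
`B_{i,j} ∈ m^{b_i - j}`, and some `B_{i,j} ≠ 0`. -/
structure Presentation [IsDomain S] : Type 1 where
  /-- the number `n - d ≥ 1` of extra variables `x_i` -/
  e : ℕ
  he : 1 ≤ e
  /-- the prime ideal `I ⊆ S[x_1,…,x_{n-d}]` defining `X` -/
  I : Ideal (MvPolynomial (Fin e) S)
  hprime : I.IsPrime
  hinj : Function.Injective (algebraMap S (MvPolynomial (Fin e) S ⧸ I))
  hfinite : Module.Finite S (MvPolynomial (Fin e) S ⧸ I)
  /-- the degrees `b_i ≥ 2` -/
  b : Fin e → ℕ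
  hb : ∀ i, 2 ≤ b i
  /-- the coefficients `B_{i,j}` (only `j ≤ b_i - 2` is relevant) -/
  Bc : Fin e → ℕ → S
  /-- `f_i(θ_i) = 0` -/
  hroot : ∀ i, Polynomial.aeval (Ideal.Quotient.mk I (MvPolynomial.X i))
    (minPolyOf (b i) (Bc i)) = 0
  /-- `f_i` is irreducible over `Frac S`, i.e. it is the minimal polynomial of `θ_i` -/
  hirr : ∀ i, Irreducible ((minPolyOf (b i) (Bc i)).map (algebraMap S (FractionRing S)))
  /-- `B_{i,j} ∈ m^{b_i - j}` -/
  hmem : ∀ i, ∀ j ≤ b i - 2, Bc i j ∈ (mS k d S) ^ (b i - j)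
  /-- some `B_{i,j} ≠ 0` -/
  hnz : ∃ i, ∃ j ≤ b i - 2, Bc i j ≠ 0

variable [IsDomain S]
variable {k d S}

/-- The coordinate ring `B = S[x_1,…,x_{n-d}]/I` of `X`. -/
abbrev BRing (P : Presentation k d S) : Type :=
  MvPolynomial (Fin P.e) S ⧸ P.I

/-- The class `θ_i` of `x_i` in `B`. -/
def theta (P : Presentation k d S) (i : Fin P.e) : BRing P :=
  Ideal.Quotient.mk P.I (MvPolynomial.X i)

/-- The elimination algebra in dimension `d`:
`G_X^{(d)} = Diff( S[ B_{i,j} W^{b_i - j} : i, j ] )`, a Rees algebra over `S`. -/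
def elimAlg (P : Presentation k d S) (D : Fin d → Derivation k S S) :
    Subalgebra S (Polynomial S) :=
  diffClosure D {p : Polynomial S | ∃ i, ∃ j ≤ P.b i - 2,
    p = Polynomial.C (P.Bc i j) * Polynomial.X ^ (P.b i - j)}

/-- An arc in `X` through `ξ` (with the required nonvanishing): a `k`-algebra homomorphism
`φ : B → K⟦t⟧` sending the maximal ideal of `B` at `ξ` into `(t)`, with all `φ(θ_i)` and
`φ(z_j)` nonzero. -/
def IsArc (P : Presentation k d S) {K : Type} [Field K] [Algebra k K]
    (φ : BRing P →ₐ[k] PowerSeries K) : Prop :=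
  (∀ s ∈ mS k d S, φ (algebraMap S (BRing P) s) ∈ tId K) ∧
  (∀ i, φ (theta P i) ∈ tId K) ∧
  (∀ i, φ (theta P i) ≠ 0) ∧
  (∀ j, φ (algebraMap S (BRing P) (zvar k d S j)) ≠ 0)

/-- The order of an arc: the minimum of the `t`-adic orders of the `φ(θ_i)` and the
`φ(z_j)`. -/
def arcOrd (P : Presentation k d S) {K : Type} [Field K] [Algebra k K]
    (φ : BRing P →ₐ[k] PowerSeries K) : ℕ :=
  sInf ((Set.range fun i => tOrd (φ (theta P i))) ∪
    (Set.range fun j => tOrd (φ (algebraMap S (BRing P) (zvar k d S j)))))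

/-- The contact algebra `G^{(1)}_{X_0,φ}`: the Rees algebra over `K⟦t⟧` generated by the
`φ(θ_i) W` together with all `φ(g) W^l` for `g W^l` a homogeneous element of `G_X^{(d)}`
with `φ(g) ≠ 0`. -/
def contactAlg (P : Presentation k d S) (D : Fin d → Derivation k S S)
    {K : Type} [Field K] [Algebra k K] (φ : BRing P →ₐ[k] PowerSeries K) :
    Subalgebra (PowerSeries K) (Polynomial (PowerSeries K)) :=
  Algebra.adjoin (PowerSeries K)
    ((Set.range fun i => (Polynomial.C (φ (theta P i)) * Polynomial.X :
        Polynomial (PowerSeries K))) ∪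
      {p : Polynomial (PowerSeries K) | ∃ (g : S) (l : ℕ),
        (Polynomial.C g * Polynomial.X ^ l : Polynomial S) ∈ elimAlg P D ∧
        φ (algebraMap S (BRing P) g) ≠ 0 ∧
        p = Polynomial.C (φ (algebraMap S (BRing P) g)) * Polynomial.X ^ l})

/-- The order of contact `r_{X,φ}` of the arc `φ` with `Max mult(X)`: the order of the
contact algebra at the closed point of `K⟦t⟧`. -/
def rOrd (P : Presentation k d S) (D : Fin d → Derivation k S S)
    {K : Type} [Field K] [Algebra k K] (φ : BRing P →ₐ[k] PowerSeries K) : ℝ≥0∞ :=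
  reesOrder (tId K) (contactAlg P D φ)

/-- The persistance `ρ_{X,φ}`: the least number of transforms of the contact algebra
(i.e. of point blow-ups directed by `φ`) needed to make the closed point leave the
singular locus, that is, to lower the Nash multiplicity. -/
def rho (P : Presentation k d S) (D : Fin d → Derivation k S S)
    {K : Type} [Field K] [Algebra k K] (φ : BRing P →ₐ[k] PowerSeries K) : ℕ :=
  persist (tId K) (PowerSeries.X : PowerSeries K) (contactAlg P D φ)


/-- Digit expansion. -/
theorem exists_digits {K V : Type*} [Field K] [CommRing V] [IsDomain V]
    (i : K →+* V) (π : V →+* K) (hπ : ∀ c, π (i c) = c) (s : V) (hs : s ≠ 0)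
    (hker : ∀ x, π x = 0 → s ∣ x) (hπs : π s = 0) :
    ∃ E : V →+* PowerSeries K, (∀ c, E (i c) = PowerSeries.C c) ∧ E s = PowerSeries.X ∧
      ∀ x, PowerSeries.constantCoeff (E x) = π x := by
  have h1 : ∀ x : V, ∃ y, x = i (π x) + s * y := by
    intro x
    obtain ⟨y, hy⟩ := hker (x - i (π x)) (by simp [hπ])
    exact ⟨y, by rw [← hy]; ring⟩
  choose δ hδ using h1
  have huniq : ∀ x y c, x = i c + s * y → δ x = y := by
    intro x y c h
    have hc : π x = c := by rw [h]; simp [hπ, hπs]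
    have := hδ x
    rw [hc] at this
    rw [this] at h
    exact mul_left_cancel₀ hs (add_left_cancel h)
  have hadd : ∀ x y, δ (x + y) = δ x + δ y := by
    intro x y
    apply huniq _ _ (π x + π y)
    conv_lhs => rw [hδ x, hδ y]
    rw [map_add]; ring
  have hmul : ∀ x y, δ (x * y) = i (π x) * δ y + δ x * y := by
    intro x y
    apply huniq _ _ (π x * π y)
    have hx := hδ x
    have hy := hδ y
    rw [map_mul]
    linear_combination y * hx + i (π x) * hy
  have hi : ∀ c, δ (i c) = 0 := fun c => huniq _ _ c (by simp)
  have hsx : ∀ x, δ (s * x) = x := fun x => huniq _ _ 0 (by simp)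
  have hiadd : ∀ n x y, δ^[n] (x + y) = δ^[n] x + δ^[n] y := by
    intro n
    induction n with
    | zero => simp
    | succ n ih => intro x y; simp [hadd, ih]
  have hi0 : ∀ n, δ^[n] 0 = 0 := by
    intro n
    have := hiadd n 0 0
    simpa using this
  have him : ∀ n c x, δ^[n] (i c * x) = i c * δ^[n] x := by
    intro n
    induction n with
    | zero => simp
    | succ n ih => intro c x; simp [hmul, ih, hi, hπ]
  let E : V → PowerSeries K := fun x => PowerSeries.mk fun n => π (δ^[n] x)
  have hE : ∀ x, E x = PowerSeries.C (π x) + PowerSeries.X * E (δ x) := by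
    intro x
    ext n
    cases n with
    | zero => simp [E]
    | succ n => simp [E, PowerSeries.coeff_succ_X_mul]
  have hEadd : ∀ x y, E (x + y) = E x + E y := by
    intro x y; ext n; simp [E, hiadd]
  have hEm : ∀ c x, E (i c * x) = PowerSeries.C c * E x := by
    intro x y; ext n; simp [E, him, hπ]
  have hEi : ∀ c, E (i c) = PowerSeries.C c := by
    intro c
    rw [hE, hi, hπ]
    have : E 0 = 0 := by ext n; simp [E, hi0]
    simp [this]
  have hEmul : ∀ x y, E (x * y) = E x * E y := by
    intro x y
    ext n
    induction n using Nat.strong_induction_on generalizing x y with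
    | _ n ih =>
      rw [hE (x * y)]
      have : E x * E y = PowerSeries.C (π (x * y)) + PowerSeries.X *
          (PowerSeries.C (π x) * E (δ y) + E (δ x) * E y) := by
        rw [hE x, map_mul, map_mul]
        linear_combination (PowerSeries.C (π x)) * hE y
      rw [this, hmul, hEadd, hEm]
      cases n with
      | zero => simp
      | succ n =>
        simp only [map_add, PowerSeries.coeff_succ_X_mul]
        rw [ih n (Nat.lt_succ_self n)]
  have h0 : E 0 = 0 := by ext n; simp [E, hi0]
  refine ⟨⟨⟨⟨E, ?_⟩, hEmul⟩, h0, hEadd⟩, hEi, ?_, ?_⟩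
  · have := hEi 1
    simpa using this
  · change E s = _
    rw [hE, hπs]
    have : δ s = 1 := by simpa using hsx 1
    rw [this]
    have := hEi 1
    simp only [map_one] at this
    simp [this]
  · intro x
    change PowerSeries.constantCoeff (E x) = _
    rw [hE]; simp

theorem exists_puiseux_aux {K S B O : Type} [Field K] [IsAlgClosed K]
    [CommRing S] [CommRing B] [Algebra S B] (ψ : S →+* PowerSeries K)
    [CommRing O] [IsDedekindDomain O] [Algebra (PowerSeries K) O]
    [Algebra.IsIntegral (PowerSeries K) O]
    (hRO : Function.Injective (algebraMap (PowerSeries K) O))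
    (gO : B →+* O) (hgO : ∀ x, gO (algebraMap S B x) = algebraMap (PowerSeries K) O (ψ x)) :
    ∃ (τ : PowerSeries K →+* PowerSeries K) (Φ : B →+* PowerSeries K) (e : ℕ),
      (∀ s, Φ (algebraMap S B s) = τ (ψ s)) ∧ (∀ c, τ (PowerSeries.C c) = PowerSeries.C c) ∧
      1 ≤ e ∧ (τ PowerSeries.X).order = e := by
  obtain ⟨Q, hQ, hQe⟩ := Ideal.exists_ideal_over_maximal_of_isIntegral (S := O)
    (IsLocalRing.maximalIdeal (PowerSeries K)) (by
      rw [(RingHom.injective_iff_ker_eq_bot _).1 hRO]; exact bot_le)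
  have hXQ : algebraMap (PowerSeries K) O PowerSeries.X ∈ Q := by
    have : (PowerSeries.X : PowerSeries K) ∈ IsLocalRing.maximalIdeal (PowerSeries K) := by
      rw [PowerSeries.maximalIdeal_eq_span_X]; exact Ideal.mem_span_singleton_self _
    rw [← hQe] at this
    exact this
  have hX0 : algebraMap (PowerSeries K) O PowerSeries.X ≠ 0 := by
    rw [Ne, map_eq_zero_iff _ hRO]; exact PowerSeries.X_ne_zero
  have hQbot : Q ≠ ⊥ := by
    rintro rfl
    exact hX0 (by simpa using hXQ)
  let V := Localization.AtPrime Q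
  have : IsDiscreteValuationRing V :=
    IsLocalization.AtPrime.isDiscreteValuationRing_of_dedekind_domain O hQbot V
  -- residue field
  let j : K →+* O ⧸ Q :=
    (Ideal.Quotient.mk Q).comp ((algebraMap (PowerSeries K) O).comp (PowerSeries.C : K →+* PowerSeries K))
  have hj : ∀ r : PowerSeries K, Ideal.Quotient.mk Q (algebraMap (PowerSeries K) O r) = j (PowerSeries.constantCoeff r) := by
    intro r
    change _ = Ideal.Quotient.mk Q (algebraMap (PowerSeries K) O (PowerSeries.C _))
    rw [Ideal.Quotient.eq, ← map_sub]
    have : (PowerSeries.X : PowerSeries K) ∣ r - PowerSeries.C (PowerSeries.constantCoeff r) := by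
      rw [PowerSeries.X_dvd_iff]; simp
    obtain ⟨c, hc⟩ := this
    rw [hc, map_mul]
    exact Q.mul_mem_right _ hXQ
  have hjint : j.IsIntegral := by
    intro y
    obtain ⟨x, rfl⟩ := Ideal.Quotient.mk_surjective y
    obtain ⟨p, hp, hp0⟩ := Algebra.IsIntegral.isIntegral (R := PowerSeries K) x
    refine ⟨p.map PowerSeries.constantCoeff, hp.map _, ?_⟩
    rw [Polynomial.eval₂_map]
    have : j.comp PowerSeries.constantCoeff = (Ideal.Quotient.mk Q).comp (algebraMap (PowerSeries K) O) := by
      ext r; exact (hj r).symm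
    rw [this, ← Polynomial.hom_eval₂, hp0, map_zero]
  have hjbij : Function.Bijective j := by
    let _ : Algebra K (O ⧸ Q) := j.toAlgebra
    have : Algebra.IsIntegral K (O ⧸ Q) := ⟨hjint⟩
    exact IsAlgClosed.algebraMap_bijective_of_isIntegral (k := K) (K := O ⧸ Q)
  let jE : K ≃+* O ⧸ Q := RingEquiv.ofBijective j hjbij
  let q : O ⧸ Q ≃+* V ⧸ IsLocalRing.maximalIdeal V :=
    IsLocalization.AtPrime.equivQuotMaximalIdeal Q V
  let π : V →+* K := (jE.symm.toRingHom.comp q.symm.toRingHom).comp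
    (Ideal.Quotient.mk (IsLocalRing.maximalIdeal V))
  have hπ0 : ∀ x, π x = 0 ↔ x ∈ IsLocalRing.maximalIdeal V := by
    intro x
    change jE.symm (q.symm (Ideal.Quotient.mk _ x)) = 0 ↔ _
    rw [map_eq_zero_iff _ jE.symm.injective, map_eq_zero_iff _ q.symm.injective,
      Ideal.Quotient.eq_zero_iff_mem]
  have hπO : ∀ x : O, jE (π (algebraMap O V x)) = Ideal.Quotient.mk Q x := by
    intro x
    change jE (jE.symm (q.symm (Ideal.Quotient.mk _ (algebraMap O V x)))) = _
    rw [RingEquiv.apply_symm_apply, RingEquiv.symm_apply_eq]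
    exact (IsLocalization.AtPrime.equivQuotMaximalIdeal_apply_mk Q V x).symm
  obtain ⟨s, hs⟩ := IsDiscreteValuationRing.exists_irreducible V
  have hsm : IsLocalRing.maximalIdeal V = Ideal.span {s} := hs.maximalIdeal_eq
  obtain ⟨E, hEC, hEs, hEc⟩ := exists_digits
    (((algebraMap O V).comp (algebraMap (PowerSeries K) O)).comp (PowerSeries.C : K →+* PowerSeries K)) π (by
      intro c
      apply jE.injective
      exact hπO _) s hs.ne_zero
    (by
      intro x hx
      rw [hπ0, hsm, Ideal.mem_span_singleton] at hx
      exact hx)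
    (by rw [hπ0, hsm]; exact Ideal.mem_span_singleton_self s)
  have hOV : Function.Injective (algebraMap O V) :=
    IsLocalization.injective V (Ideal.primeCompl_le_nonZeroDivisors Q)
  have hXV : algebraMap O V (algebraMap (PowerSeries K) O PowerSeries.X) ≠ 0 := by
    rw [Ne, map_eq_zero_iff _ hOV]; exact hX0
  obtain ⟨e, u, hu⟩ := IsDiscreteValuationRing.eq_unit_mul_pow_irreducible hXV hs
  refine ⟨E.comp ((algebraMap O V).comp (algebraMap (PowerSeries K) O)), E.comp ((algebraMap O V).comp gO), e,
    ?_, hEC, ?_, ?_⟩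
  · intro x
    change E (algebraMap O V (gO (algebraMap S B x))) = E (algebraMap O V (algebraMap (PowerSeries K) O (ψ x)))
    rw [hgO]
  · rw [Nat.one_le_iff_ne_zero]
    rintro rfl
    rw [pow_zero, mul_one] at hu
    have h1 : π (algebraMap O V (algebraMap (PowerSeries K) O PowerSeries.X)) = 0 := by
      apply jE.injective
      rw [hπO, map_zero, Ideal.Quotient.eq_zero_iff_mem]
      exact hXQ
    rw [hu, hπ0] at h1
    exact (IsLocalRing.mem_maximalIdeal _).1 h1 u.isUnit
  · change (E (algebraMap O V (algebraMap (PowerSeries K) O PowerSeries.X))).order = _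
    rw [hu, map_mul, map_pow, hEs, PowerSeries.order_mul, PowerSeries.order_X_pow,
      PowerSeries.order_zero_of_unit (u.isUnit.map E), zero_add]


theorem exists_puiseux_aux2 {K S B F L : Type} [Field K] [IsAlgClosed K]
    [CommRing S] [CommRing B] [Algebra S B] (ψ : S →+* PowerSeries K)
    [Field F] [CharZero F] [Algebra (PowerSeries K) F] [IsFractionRing (PowerSeries K) F]
    [Field L] [Algebra F L] [Algebra (PowerSeries K) L] [IsScalarTower (PowerSeries K) F L]
    [FiniteDimensional F L]
    (g : B →+* L) (hg : ∀ x, g (algebraMap S B x) = algebraMap (PowerSeries K) L (ψ x))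
    (hgint : ∀ b, IsIntegral (PowerSeries K) (g b)) :
    ∃ (τ : PowerSeries K →+* PowerSeries K) (Φ : B →+* PowerSeries K) (e : ℕ),
      (∀ s, Φ (algebraMap S B s) = τ (ψ s)) ∧ (∀ c, τ (PowerSeries.C c) = PowerSeries.C c) ∧
      1 ≤ e ∧ (τ PowerSeries.X).order = e := by
  have : IsDedekindDomain (integralClosure (PowerSeries K) L) :=
    integralClosure.isDedekindDomain (PowerSeries K) F L
  have h1 : Function.Injective (algebraMap (PowerSeries K) L) := by
    rw [IsScalarTower.algebraMap_eq (PowerSeries K) F L]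
    exact (algebraMap F L).injective.comp (IsFractionRing.injective (PowerSeries K) F)
  refine exists_puiseux_aux (O := integralClosure (PowerSeries K) L) ψ ?_
    (RingHom.codRestrict g (integralClosure (PowerSeries K) L) hgint) ?_
  · intro x y hxy
    exact h1 (congrArg Subtype.val hxy)
  · intro x
    exact Subtype.ext (hg x)

theorem exists_puiseux {K S B : Type} [Field K] [IsAlgClosed K] [CharZero K]
    [CommRing S] [IsDomain S] [CommRing B] [IsDomain B] [Algebra S B]
    (hinj : Function.Injective (algebraMap S B)) (hfin : Module.Finite S B)
    (ψ : S →+* PowerSeries K) (hψ : Function.Injective ψ) :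
    ∃ (τ : PowerSeries K →+* PowerSeries K) (Φ : B →+* PowerSeries K) (e : ℕ),
      (∀ s, Φ (algebraMap S B s) = τ (ψ s)) ∧ (∀ c, τ (PowerSeries.C c) = PowerSeries.C c) ∧
      1 ≤ e ∧ (τ PowerSeries.X).order = e := by
  classical
  let R := PowerSeries K
  let F := FractionRing R
  let Ω := AlgebraicClosure F
  let algSΩ : Algebra S Ω := ((algebraMap R Ω).comp ψ).toAlgebra
  have hRΩ : Function.Injective (algebraMap R Ω) := by
    rw [IsScalarTower.algebraMap_eq R F Ω]
    exact (algebraMap F Ω).injective.comp (IsFractionRing.injective R F)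
  have : FaithfulSMul S Ω := (faithfulSMul_iff_algebraMap_injective S Ω).2 (hRΩ.comp hψ)
  have : FaithfulSMul S B := (faithfulSMul_iff_algebraMap_injective S B).2 hinj
  have : Algebra.IsIntegral S B := Algebra.IsIntegral.of_finite S B
  have : Algebra.IsAlgebraic S B := Algebra.IsIntegral.isAlgebraic
  let g : B →ₐ[S] Ω := IsAlgClosed.lift
  obtain ⟨T, hT⟩ := hfin.fg_top
  have : CharZero R := charZero_of_injective_ringHom (f := (PowerSeries.C : K →+* R))
    PowerSeries.C_injective
  have : CharZero F := IsFractionRing.charZero_of_isFractionRing R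
  have hgint : ∀ b, IsIntegral R (g b) := by
    intro b
    obtain ⟨p, hp, hp0⟩ := (Algebra.IsIntegral.isIntegral (R := S) b).map g
    refine ⟨p.map ψ, hp.map ψ, ?_⟩
    rw [Polynomial.eval₂_map]
    exact hp0
  let L : IntermediateField F Ω := IntermediateField.adjoin F (g '' (T : Set B))
  have : Finite (g '' (T : Set B)) := (T.finite_toSet.image g).to_subtype
  have : FiniteDimensional F L := IntermediateField.finiteDimensional_adjoin (by
    rintro _ ⟨b, hb, rfl⟩
    exact IsIntegral.tower_top (hgint b))
  have hgL : ∀ b, g b ∈ L := by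
    intro b
    have hb : b ∈ Submodule.span S (T : Set B) := by rw [hT]; trivial
    induction hb using Submodule.span_induction with
    | mem x hx => exact IntermediateField.subset_adjoin F _ ⟨x, hx, rfl⟩
    | zero => rw [map_zero]; exact L.zero_mem
    | add x y _ _ hx hy => rw [map_add]; exact L.add_mem hx hy
    | smul a x _ hx =>
      rw [map_smul, Algebra.smul_def]
      refine L.mul_mem ?_ hx
      change algebraMap R Ω (ψ a) ∈ L
      rw [IsScalarTower.algebraMap_apply R F Ω]
      exact L.algebraMap_mem _
  exact exists_puiseux_aux2 (F := F) (L := L) ψ (RingHom.codRestrict g.toRingHom L hgL)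
    (fun x => Subtype.ext (g.commutes x)) (by
      intro b
      obtain ⟨p, hp, hp0⟩ := hgint b
      refine ⟨p, hp, ?_⟩
      apply (algebraMap L Ω).injective
      rw [Polynomial.hom_eval₂, map_zero]
      exact hp0)

theorem mem_tId_pow {K : Type*} [Field K] (f : PowerSeries K) (n : ℕ) :
    f ∈ tId K ^ n ↔ (n : ℕ∞) ≤ f.order := by
  rw [tId, Ideal.span_singleton_pow, Ideal.mem_span_singleton, PowerSeries.X_pow_dvd_iff]
  constructor
  · intro h
    exact PowerSeries.le_order _ _ fun i hi => h i (by exact_mod_cast hi)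
  · intro h m hm
    exact PowerSeries.coeff_of_lt_order _ (lt_of_lt_of_le (by exact_mod_cast hm) h)

theorem adicOrder_eq {R : Type*} [CommRing R] (m : Ideal R) (f : R) (N : ℕ)
    (h : ∀ n : ℕ, f ∈ m ^ n ↔ n ≤ N) : adicOrder m f = N := by
  have : {n : ℕ | f ∈ m ^ n} = Set.Iic N := by ext n; exact h n
  rw [adicOrder, this, csSup_Iic]

theorem tOrd_eq {K : Type*} [Field K] (f : PowerSeries K) (N : ℕ) (h : f.order = N) :
    tOrd f = N :=
  adicOrder_eq _ _ _ fun n => by rw [mem_tId_pow, h]; exact_mod_cast Iff.rfl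

theorem coe_tOrd {K : Type*} [Field K] (f : PowerSeries K) (hf : f ≠ 0) :
    f.order = (tOrd f : ℕ∞) := by
  have h := PowerSeries.coe_toNat_order hf
  rw [tOrd_eq f _ h.symm, h]

theorem mem_mPoly_pow {k : Type} [Field k] {d : ℕ} (p : MvPolynomial (Fin d) k) (n : ℕ)
    (h : ∀ x, Finsupp.degree x < n → p.coeff x = 0) : p ∈ mPoly k d ^ n := by
  have h1 : MvPolynomial.idealOfVars (Fin d) k ≤ mPoly k d := by
    rw [MvPolynomial.idealOfVars, Ideal.span_le]
    rintro _ ⟨j, rfl⟩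
    simp [mPoly, RingHom.mem_ker]
  exact Ideal.pow_right_mono h1 n ((MvPolynomial.mem_pow_idealOfVars_iff' n p).2 h)

theorem coeff_genericArc {k K : Type} [Field k] [Field K] [Algebra k K] {d : ℕ} (a : Fin d → K)
    (p : MvPolynomial (Fin d) k) (n : ℕ) :
    PowerSeries.coeff n (MvPolynomial.aeval
      (fun j => PowerSeries.C (a j) * PowerSeries.X : Fin d → PowerSeries K) p) =
      MvPolynomial.aeval a (MvPolynomial.homogeneousComponent n p) := by
  induction p using MvPolynomial.induction_on' with
  | add p q hp hq => simp only [map_add, hp, hq]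
  | monomial m c =>
    have h1 : MvPolynomial.aeval
      (fun j => PowerSeries.C (a j) * PowerSeries.X : Fin d → PowerSeries K)
        (MvPolynomial.monomial m c) =
        PowerSeries.C (MvPolynomial.aeval a (MvPolynomial.monomial m c)) *
          PowerSeries.X ^ (Finsupp.degree m) := by
      rw [MvPolynomial.aeval_monomial, MvPolynomial.aeval_monomial]
      rw [Finsupp.prod_fintype _ _ (by simp), Finsupp.prod_fintype _ _ (by simp),
        Finsupp.degree_eq_sum]
      simp only [mul_pow, Finset.prod_mul_distrib, map_mul, map_prod, map_pow,
        Finset.prod_pow_eq_pow_sum, ← mul_assoc]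
      rw [PowerSeries.algebraMap_apply]
    rw [h1, PowerSeries.coeff_C_mul, PowerSeries.coeff_X_pow]
    split_ifs with h
    · rw [mul_one, MvPolynomial.homogeneousComponent_of_mem
        (MvPolynomial.isHomogeneous_monomial c h.symm), if_pos rfl]
    · rw [MvPolynomial.homogeneousComponent_of_mem
        (MvPolynomial.isHomogeneous_monomial c rfl), if_neg h]
      simp

theorem exists_generic_arc {k K : Type} [Field k] [Field K] [Algebra k K] {d : ℕ}
    (a : Fin d → K)
    (ha : Function.Injective (MvPolynomial.aeval a : MvPolynomial (Fin d) k →ₐ[k] K))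
    (S : Type) [CommRing S] [IsDomain S] [Algebra (MvPolynomial (Fin d) k) S]
    [Algebra k S] [IsScalarTower k (MvPolynomial (Fin d) k) S] [IsSLoc k d S] :
    ∃ ψ : S →+* PowerSeries K, Function.Injective ψ ∧
      (∀ c, ψ (algebraMap k S c) = PowerSeries.C (algebraMap k K c)) ∧
      (∀ j, ψ (zvar k d S j) = PowerSeries.C (a j) * PowerSeries.X) ∧
      (∀ (g : S) (n : ℕ), g ∈ mS k d S ^ n ↔ (n : ℕ∞) ≤ (ψ g).order) := by
  let ψ0 : MvPolynomial (Fin d) k →ₐ[k] PowerSeries K := MvPolynomial.aeval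
      (fun j => PowerSeries.C (a j) * PowerSeries.X : Fin d → PowerSeries K)
  have hc0 : ∀ p, PowerSeries.constantCoeff (ψ0 p) =
      algebraMap k K (MvPolynomial.constantCoeff p) := by
    intro p
    rw [← PowerSeries.coeff_zero_eq_constantCoeff_apply, coeff_genericArc,
      MvPolynomial.homogeneousComponent_zero]
    simp [MvPolynomial.constantCoeff_eq]
  have hmP : ∀ p, p ∈ mPoly k d ↔ MvPolynomial.constantCoeff p = 0 := by
    intro p
    rw [mPoly, RingHom.mem_ker]
    have := MvPolynomial.aeval_zero (S₁ := k) p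
    change MvPolynomial.aeval (0 : Fin d → k) p = 0 ↔ _
    rw [this]; simp
  have hunit : ∀ y : (mPoly k d).primeCompl, IsUnit (ψ0.toRingHom y) := by
    intro y
    rw [PowerSeries.isUnit_iff_constantCoeff]
    change IsUnit (PowerSeries.constantCoeff (ψ0 y))
    rw [hc0, isUnit_iff_ne_zero, Ne, map_eq_zero_iff _ (algebraMap k K).injective, ← hmP]
    exact y.2
  let ψ : S →+* PowerSeries K := IsLocalization.lift hunit
  have hψ : ∀ p, ψ (algebraMap _ S p) = ψ0 p := fun p => IsLocalization.lift_eq hunit p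
  have hord : ∀ (p : MvPolynomial (Fin d) k) (n : ℕ), (n : ℕ∞) ≤ (ψ0 p).order →
      ∀ x, Finsupp.degree x < n → p.coeff x = 0 := by
    intro p n hn x hx
    have h1 : PowerSeries.coeff (Finsupp.degree x) (ψ0 p) = 0 :=
      PowerSeries.coeff_of_lt_order _ (lt_of_lt_of_le (by exact_mod_cast hx) hn)
    rw [coeff_genericArc] at h1
    have h2 := (map_eq_zero_iff _ ha).1 h1
    have h3 := MvPolynomial.coeff_homogeneousComponent (Finsupp.degree x) p x
    rw [h2, if_pos rfl] at h3
    simpa using h3.symm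
  have hmt : (mS k d S).map ψ ≤ tId K := by
    rw [mS, Ideal.map_map, Ideal.map_le_iff_le_comap]
    intro p hp
    rw [Ideal.mem_comap, RingHom.comp_apply, hψ, tId, Ideal.mem_span_singleton,
      PowerSeries.X_dvd_iff, hc0, (hmP p).1 hp, map_zero]
  refine ⟨ψ, ?_, ?_, ?_, ?_⟩
  · rw [injective_iff_map_eq_zero]
    intro g hg
    obtain ⟨⟨p, u⟩, hpu⟩ := IsLocalization.surj (mPoly k d).primeCompl g
    have h1 : ψ0 p = 0 := by
      rw [← hψ]
      simp only at hpu
      rw [← hpu, map_mul, hg, zero_mul]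
    have hp : p = 0 := by
      ext x
      rw [hord p (Finsupp.degree x + 1) (by rw [h1]; simp) x (Nat.lt_succ_self _)]
      simp
    simp only [hp, map_zero] at hpu
    exact ((IsLocalization.map_units S u).mul_left_eq_zero).1 hpu
  · intro c
    rw [IsScalarTower.algebraMap_apply k (MvPolynomial (Fin d) k) S, hψ]
    rw [← PowerSeries.algebraMap_apply]
    exact ψ0.commutes c
  · intro j
    rw [zvar, hψ]
    exact MvPolynomial.aeval_X _ j
  · intro g n
    constructor
    · intro hg
      rw [← mem_tId_pow]
      have h1 := Ideal.mem_map_of_mem ψ hg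
      rw [Ideal.map_pow] at h1
      exact Ideal.pow_right_mono hmt n h1
    · intro hg
      obtain ⟨⟨p, u⟩, hpu⟩ := IsLocalization.surj (mPoly k d).primeCompl g
      simp only at hpu
      have hu := IsLocalization.map_units S u
      rw [← Ideal.mul_unit_mem_iff_mem _ hu, hpu, mS, ← Ideal.map_pow]
      apply Ideal.mem_map_of_mem
      apply mem_mPoly_pow
      apply hord
      rw [← hψ, ← hpu, map_mul, PowerSeries.order_mul]
      exact hg.trans le_self_add

theorem derivation_pow {k S : Type} [CommRing k] [CommRing S] [Algebra k S] (D : Derivation k S S)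
    (m : Ideal S) (l : ℕ) : ∀ f ∈ m ^ (l + 1), D f ∈ m ^ l := by
  induction l with
  | zero => simp
  | succ l ih =>
    intro f hf
    rw [pow_succ] at hf
    induction hf using Submodule.mul_induction_on' with
    | mem_mul_mem x hx y hy =>
      rw [Derivation.leibniz, smul_eq_mul, smul_eq_mul]
      refine Ideal.add_mem _ (Ideal.mul_mem_right _ _ hx) ?_
      rw [mul_comm, pow_succ]
      exact Ideal.mul_mem_mul (ih x hx) hy
    | add x _ y _ hx hy => rw [map_add]; exact Ideal.add_mem _ hx hy

/-- Power series algebra of elements of slope at least `c`. -/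
def slopeAlg (K : Type) [Field K] (c : ℝ) :
    Subalgebra (PowerSeries K) (Polynomial (PowerSeries K)) where
  carrier := {p | ∀ n m : ℕ, (m : ℝ) < c * n → PowerSeries.coeff m (p.coeff n) = 0}
  add_mem' := by
    intro p q hp hq n m h
    rw [Polynomial.coeff_add, map_add, hp n m h, hq n m h, add_zero]
  mul_mem' := by
    intro p q hp hq n m h
    rw [Polynomial.coeff_mul, map_sum]
    refine Finset.sum_eq_zero fun x hx => ?_
    rw [PowerSeries.coeff_mul]
    refine Finset.sum_eq_zero fun y hy => ?_
    have hx' : (x.1 : ℝ) + x.2 = n := by exact_mod_cast Finset.HasAntidiagonal.mem_antidiagonal.1 hx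
    have hy' : (y.1 : ℝ) + y.2 = m := by exact_mod_cast Finset.HasAntidiagonal.mem_antidiagonal.1 hy
    by_cases h1 : (y.1 : ℝ) < c * x.1
    · rw [hp _ _ h1, zero_mul]
    · rw [hq x.2 y.2, mul_zero]
      rw [← hx', ← hy'] at h
      linarith
  algebraMap_mem' := by
    intro r n m h
    rw [Polynomial.algebraMap_apply, Polynomial.coeff_C]
    split_ifs with hn
    · subst hn
      have : (0 : ℝ) ≤ m := Nat.cast_nonneg m
      simp at h
      linarith
    · simp

theorem mem_slopeAlg {K : Type} [Field K] (c : ℝ) (f : PowerSeries K) (n : ℕ) (hf : f ≠ 0) :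
    (Polynomial.C f * Polynomial.X ^ n : Polynomial (PowerSeries K)) ∈ slopeAlg K c ↔
      c * n ≤ tOrd f := by
  constructor
  · intro h
    by_contra hlt
    push Not at hlt
    have h1 := h n _ hlt
    rw [Polynomial.coeff_C_mul_X_pow, if_pos rfl] at h1
    have h2 := (PowerSeries.order_eq_nat.1 (coe_tOrd f hf)).1
    exact h2 h1
  · intro h n' m hm
    rw [Polynomial.coeff_C_mul_X_pow]
    split_ifs with hn
    · subst hn
      apply PowerSeries.coeff_of_lt_order
      rw [coe_tOrd f hf]
      have : (m : ℝ) < tOrd f := lt_of_lt_of_le hm h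
      exact_mod_cast this
    · simp

theorem elimAlg_le_rees {k : Type} [Field k] {d : ℕ} {S : Type} [CommRing S]
    [Algebra (MvPolynomial (Fin d) k) S] [Algebra k S] [IsDomain S]
    (D : Fin d → Derivation k S S) (P : Presentation k d S) :
    elimAlg P D ≤ reesAlgebra (mS k d S) := by
  refine sInf_le ⟨?_, ?_, ?_, ?_⟩
  · rintro _ ⟨i, j, hj, rfl⟩
    intro n
    rw [Polynomial.coeff_C_mul_X_pow]
    split_ifs with h
    · subst h; exact P.hmem i j hj
    · exact Ideal.zero_mem _
  · intro p hp n n'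
    rw [Polynomial.coeff_C_mul_X_pow]
    split_ifs with h
    · subst h; exact hp _
    · exact Ideal.zero_mem _
  · intro f l _ hf n
    have h1 := hf (l + 1)
    rw [Polynomial.coeff_C_mul_X_pow, if_pos rfl] at h1
    rw [Polynomial.coeff_C_mul_X_pow]
    split_ifs with h
    · subst h; exact Ideal.pow_le_pow_right (Nat.le_succ _) h1
    · exact Ideal.zero_mem _
  · intro f l j hf n
    have h1 := hf (l + 1)
    rw [Polynomial.coeff_C_mul_X_pow, if_pos rfl] at h1
    rw [Polynomial.coeff_C_mul_X_pow]
    split_ifs with h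
    · subst h; exact derivation_pow _ _ _ _ h1
    · exact Ideal.zero_mem _

theorem gen_mem_elimAlg {k : Type} [Field k] {d : ℕ} {S : Type} [CommRing S]
    [Algebra (MvPolynomial (Fin d) k) S] [Algebra k S] [IsDomain S]
    (D : Fin d → Derivation k S S) (P : Presentation k d S) (i : Fin P.e) (j : ℕ)
    (hj : j ≤ P.b i - 2) :
    (Polynomial.C (P.Bc i j) * Polynomial.X ^ (P.b i - j) : Polynomial S) ∈ elimAlg P D := by
  rw [elimAlg, diffClosure, Algebra.mem_sInf]
  intro G hG
  exact hG.1 ⟨i, j, hj, rfl⟩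

theorem Bc_zero_ne {k : Type} [Field k] {d : ℕ} {S : Type} [CommRing S]
    [Algebra (MvPolynomial (Fin d) k) S] [Algebra k S] [IsDomain S]
    (P : Presentation k d S) (i : Fin P.e) : P.Bc i 0 ≠ 0 := by
  intro h0
  have hirr := P.hirr i
  have hb := P.hb i
  set f := minPolyOf (P.b i) (P.Bc i) with hf
  have hlow : (∑ j ∈ Finset.range (P.b i - 1),
      Polynomial.C (P.Bc i j) * Polynomial.X ^ j).degree < (P.b i : WithBot ℕ) := by
    refine lt_of_le_of_lt (Polynomial.degree_sum_le _ _) ?_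
    rw [Finset.sup_lt_iff (WithBot.bot_lt_coe _)]
    intro j hj
    refine lt_of_le_of_lt (Polynomial.degree_C_mul_X_pow_le _ _) ?_
    have := Finset.mem_range.1 hj
    exact_mod_cast (by omega : j < P.b i)
  have hmon : f.Monic := Polynomial.monic_X_pow_add hlow
  have hdeg : f.natDegree = P.b i := by
    apply Polynomial.natDegree_eq_of_degree_eq_some
    rw [hf, minPolyOf, Polynomial.degree_add_eq_left_of_degree_lt] <;>
      rw [Polynomial.degree_X_pow]
    exact hlow
  have hXf : (Polynomial.X : Polynomial S) ∣ f := by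
    rw [hf, minPolyOf]
    refine dvd_add (dvd_pow_self _ (by omega)) (Finset.dvd_sum fun j _ => ?_)
    rcases Nat.eq_zero_or_pos j with rfl | hj
    · simp [h0]
    · exact Dvd.dvd.mul_left (dvd_pow_self _ (by omega)) _
  have hXF : (Polynomial.X : Polynomial (FractionRing S)) ∣
      f.map (algebraMap S (FractionRing S)) := by
    have := Polynomial.map_dvd (algebraMap S (FractionRing S)) hXf
    rwa [Polynomial.map_X] at this
  have hd1 := Polynomial.degree_eq_degree_of_associated
    (Polynomial.irreducible_X.associated_of_dvd hirr hXF)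
  rw [Polynomial.degree_X, hmon.degree_map, Polynomial.degree_eq_natDegree hmon.ne_zero,
    hdeg] at hd1
  have : 1 = P.b i := by exact_mod_cast hd1
  omega

/-- The slope bound for roots of a monic polynomial. -/
theorem root_slope {K : Type} [Field K] (b : ℕ) (hb : 2 ≤ b) (y : PowerSeries K) (hy : y ≠ 0)
    (β : ℕ → PowerSeries K) (c : ℝ)
    (hβ : ∀ j ≤ b - 2, β j ≠ 0 → c * ((b - j : ℕ) : ℝ) ≤ tOrd (β j))
    (hroot : y ^ b + ∑ j ∈ Finset.range (b - 1), β j * y ^ j = 0) : c ≤ tOrd y := by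
  by_contra hlt
  push Not at hlt
  have hyo := coe_tOrd y hy
  set v := tOrd y
  have hdvd : (PowerSeries.X : PowerSeries K) ^ (b * v + 1) ∣ y ^ b := by
    rw [eq_neg_of_add_eq_zero_left hroot, dvd_neg]
    refine Finset.dvd_sum fun j hj => ?_
    have hj' := Finset.mem_range.1 hj
    by_cases h0 : β j = 0
    · simp [h0]
    have h1 := hβ j (by omega) h0
    have hpos : (0 : ℝ) < ((b - j : ℕ) : ℝ) := by exact_mod_cast (by omega : 0 < b - j)
    have h2 : (v : ℝ) * ((b - j : ℕ) : ℝ) < tOrd (β j) :=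
      lt_of_lt_of_le (mul_lt_mul_of_pos_right hlt hpos) h1
    have h3 : v * (b - j) < tOrd (β j) := by exact_mod_cast h2
    have h4 : v * (b - j) + v * j = b * v := by
      rw [← mul_add, Nat.sub_add_cancel (by omega), mul_comm]
    have h5 : b * v + 1 ≤ tOrd (β j) + j * v := by
      rw [mul_comm j v]; omega
    refine (pow_dvd_pow _ h5).trans ?_
    rw [pow_add]
    refine mul_dvd_mul ?_ ?_
    · rw [← Ideal.mem_span_singleton, ← Ideal.span_singleton_pow]
      exact (mem_tId_pow _ _).2 (coe_tOrd _ h0).ge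
    · rw [mul_comm, pow_mul]
      refine pow_dvd_pow_of_dvd ?_ j
      rw [← Ideal.mem_span_singleton, ← Ideal.span_singleton_pow]
      exact (mem_tId_pow _ _).2 hyo.ge
  rw [← Ideal.mem_span_singleton, ← Ideal.span_singleton_pow] at hdvd
  have h6 := (mem_tId_pow _ _).1 hdvd
  rw [PowerSeries.order_pow, hyo, nsmul_eq_mul] at h6
  have : b * v + 1 ≤ b * v := by exact_mod_cast h6
  omega

theorem exists_arc_of_generic
    (k : Type) [Field k] (d : ℕ) (hd : 1 ≤ d)
    (S : Type) [CommRing S] [IsDomain S] [Algebra (MvPolynomial (Fin d) k) S]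
    [Algebra k S] [IsScalarTower k (MvPolynomial (Fin d) k) S] [IsSLoc k d S]
    (D : Fin d → Derivation k S S) (P : Presentation k d S)
    (K : Type) [Field K] [Algebra k K] [IsAlgClosed K] [CharZero K] (a : Fin d → K)
    (ha : Function.Injective (MvPolynomial.aeval a : MvPolynomial (Fin d) k →ₐ[k] K))
    (haj : ∀ j, a j ≠ 0) :
    ∃ (K : Type) (_ : Field K) (_ : Algebra k K)
      (φ : BRing P →ₐ[k] PowerSeries K), IsArc P φ ∧
      rOrd P D φ / (arcOrd P φ : ℝ≥0∞) = reesOrder (mS k d S) (elimAlg P D) := by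
  obtain ⟨ψ, hψinj, hψk, hψz, hψm⟩ := exists_generic_arc (k := k) a ha S
  have := P.hprime
  have : IsDomain (BRing P) := Ideal.Quotient.isDomain P.I
  obtain ⟨τ, Φ, e, hΦ, hτ, he, hτX⟩ :=
    exists_puiseux (K := K) (S := S) (B := BRing P) P.hinj P.hfinite ψ hψinj
  let φ : BRing P →ₐ[k] PowerSeries K := { Φ with
    commutes' := by
      intro c
      change Φ (algebraMap k (BRing P) c) = _
      rw [IsScalarTower.algebraMap_apply k S (BRing P), hΦ, hψk, hτ,
        PowerSeries.algebraMap_apply] }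
  have hφ : ∀ s, φ (algebraMap S (BRing P) s) = τ (ψ s) := hΦ
  -- orders of images of elements of `S`
  have hτord : ∀ (f : PowerSeries K) (N : ℕ), f.order = N → (τ f).order = ((e * N : ℕ) : ℕ∞) := by
    intro f N hN
    have hf : f ≠ 0 := by
      rintro rfl
      simp at hN
    obtain ⟨u, hu⟩ : (PowerSeries.X : PowerSeries K) ^ N ∣ f := by
      rw [← Ideal.mem_span_singleton, ← Ideal.span_singleton_pow]
      exact (mem_tId_pow _ _).2 hN.ge
    have hu0 : u ≠ 0 := by
      rintro rfl
      exact hf (by rw [hu, mul_zero])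
    have huo : u.order = 0 := by
      rw [hu, PowerSeries.order_mul, PowerSeries.order_X_pow, coe_tOrd u hu0] at hN
      have h1 : N + tOrd u = N := by exact_mod_cast hN
      rw [coe_tOrd u hu0]
      exact_mod_cast (by omega : tOrd u = 0)
    have hunit : IsUnit u := by
      rw [PowerSeries.isUnit_iff_constantCoeff, isUnit_iff_ne_zero]
      intro h
      rw [← PowerSeries.one_le_order_iff_constCoeff_eq_zero, huo] at h
      simp at h
    rw [hu, map_mul, map_pow, PowerSeries.order_mul, PowerSeries.order_pow, hτX,
      PowerSeries.order_zero_of_unit (hunit.map τ), add_zero, nsmul_eq_mul]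
    push_cast
    ring
  have hψ0 : ∀ g, g ≠ 0 → ψ g ≠ 0 := fun g hg => by
    rwa [Ne, map_eq_zero_iff _ hψinj]
  have hν : ∀ g, g ≠ 0 → (ψ g).order = (adicOrder (mS k d S) g : ℕ∞) := by
    intro g hg
    have h1 := coe_tOrd _ (hψ0 g hg)
    rw [adicOrder_eq (mS k d S) g (tOrd (ψ g)) (fun n => by
      rw [hψm, h1]; exact_mod_cast Iff.rfl), h1]
  have hφord : ∀ g, g ≠ 0 → (φ (algebraMap S (BRing P) g)).order =
      ((e * adicOrder (mS k d S) g : ℕ) : ℕ∞) := fun g hg => by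
    rw [hφ]; exact hτord _ _ (hν g hg)
  have hφt : ∀ g, g ≠ 0 → tOrd (φ (algebraMap S (BRing P) g)) =
      e * adicOrder (mS k d S) g := fun g hg => tOrd_eq _ _ (hφord g hg)
  have hφ0 : ∀ g, g ≠ 0 → φ (algebraMap S (BRing P) g) ≠ 0 := by
    intro g hg h0
    have := hφord g hg
    rw [h0, PowerSeries.order_zero] at this
    exact ENat.top_ne_natCast _ this
  have hφz : ∀ j, (φ (algebraMap S (BRing P) (zvar k d S j))).order = (e : ℕ∞) := by
    intro j
    have h1 : (ψ (zvar k d S j)).order = ((1 : ℕ) : ℕ∞) := by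
      rw [hψz, PowerSeries.order_mul, PowerSeries.order_zero_of_unit
        ((isUnit_iff_ne_zero.2 (haj j)).map PowerSeries.C), PowerSeries.order_X]
      simp
    rw [hφ, hτord _ _ h1, mul_one]
  -- the order of the elimination algebra
  set ω := reesOrder (mS k d S) (elimAlg P D) with hω
  have hωle : ∀ (g : S) (l : ℕ), g ≠ 0 → 1 ≤ l →
      (Polynomial.C g * Polynomial.X ^ l : Polynomial S) ∈ elimAlg P D →
      ω ≤ (adicOrder (mS k d S) g : ℝ≥0∞) / (l : ℝ≥0∞) :=
    fun g l hg hl hgl => sInf_le ⟨g, l, hg, hl, hgl, rfl⟩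
  have hωtop : ω ≠ ⊤ := by
    obtain ⟨i, j, hj, h0⟩ := P.hnz
    have hb := P.hb i
    have h1 := hωle _ _ h0 (by omega) (gen_mem_elimAlg D P i j hj)
    refine ne_top_of_le_ne_top (ENNReal.div_ne_top (ENNReal.natCast_ne_top _) ?_) h1
    have : P.b i - j ≠ 0 := by omega
    exact_mod_cast this
  have hω1 : 1 ≤ ω := by
    refine le_sInf ?_
    rintro _ ⟨g, l, hg, hl, hgl, rfl⟩
    have h1 := elimAlg_le_rees D P hgl l
    rw [Polynomial.coeff_C_mul_X_pow, if_pos rfl, hψm, hν g hg] at h1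
    have h2 : l ≤ adicOrder (mS k d S) g := by exact_mod_cast h1
    have hl0 : (l : ℝ≥0∞) ≠ 0 := by exact_mod_cast (by omega : l ≠ 0)
    rw [ENNReal.le_div_iff_mul_le (Or.inl hl0) (Or.inl (ENNReal.natCast_ne_top _)), one_mul]
    exact_mod_cast h2
  set w : ℝ := ω.toReal with hw
  have hwω : ENNReal.ofReal w = ω := ENNReal.ofReal_toReal hωtop
  have hw0 : 0 ≤ w := ENNReal.toReal_nonneg
  have hw1 : 1 ≤ w := by
    rw [hw, ← ENNReal.toReal_one]
    exact ENNReal.toReal_mono hωtop hω1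
  have hwle : ∀ (g : S) (l : ℕ), g ≠ 0 →
      (Polynomial.C g * Polynomial.X ^ l : Polynomial S) ∈ elimAlg P D →
      (e * w) * l ≤ tOrd (φ (algebraMap S (BRing P) g)) := by
    intro g l hg hgl
    rcases Nat.eq_zero_or_pos l with rfl | hl
    · simp
    have h1 := hωle g l hg hl hgl
    have hl0 : (l : ℝ≥0∞) ≠ 0 := by exact_mod_cast (by omega : l ≠ 0)
    rw [ENNReal.le_div_iff_mul_le (Or.inl hl0) (Or.inl (ENNReal.natCast_ne_top _))] at h1
    have h2 := ENNReal.toReal_mono (ENNReal.natCast_ne_top _) h1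
    rw [ENNReal.toReal_mul, ENNReal.toReal_natCast, ENNReal.toReal_natCast] at h2
    rw [hφt g hg, mul_assoc]
    push_cast
    exact mul_le_mul_of_nonneg_left h2 (Nat.cast_nonneg _)
  -- the roots
  have hrootφ : ∀ i, φ (theta P i) ^ P.b i + ∑ j ∈ Finset.range (P.b i - 1),
      φ (algebraMap S (BRing P) (P.Bc i j)) * φ (theta P i) ^ j = 0 := by
    intro i
    have h1 := congrArg φ (P.hroot i)
    rw [minPolyOf] at h1
    simp only [map_add, map_sum, map_mul, map_pow, Polynomial.aeval_X, Polynomial.aeval_C,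
      map_zero] at h1
    exact h1
  have hθ0 : ∀ i, φ (theta P i) ≠ 0 := by
    intro i h0
    have hb := P.hb i
    have h1 := hrootφ i
    rw [h0, zero_pow (by omega), zero_add, Finset.sum_eq_single 0] at h1
    · rw [pow_zero, mul_one] at h1
      exact hφ0 _ (Bc_zero_ne P i) h1
    · intro j _ hj
      rw [zero_pow hj, mul_zero]
    · intro h
      exact absurd (Finset.mem_range.2 (by omega)) h
  have hθ : ∀ i, (e * w : ℝ) ≤ tOrd (φ (theta P i)) := by
    intro i
    refine root_slope (P.b i) (P.hb i) _ (hθ0 i)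
      (fun j => φ (algebraMap S (BRing P) (P.Bc i j))) _ ?_ (hrootφ i)
    intro j hj hj0
    refine hwle _ _ ?_ (gen_mem_elimAlg D P i j hj)
    intro h
    exact hj0 (by simp [h])
  have hθe : ∀ i, e ≤ tOrd (φ (theta P i)) := by
    intro i
    have h1 : (e : ℝ) ≤ tOrd (φ (theta P i)) :=
      le_trans (le_mul_of_one_le_right (Nat.cast_nonneg _) hw1) (hθ i)
    exact_mod_cast h1
  have harc : arcOrd P φ = e := by
    have hz : ∀ j, tOrd (φ (algebraMap S (BRing P) (zvar k d S j))) = e :=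
      fun j => tOrd_eq _ _ (hφz j)
    apply le_antisymm
    · exact Nat.sInf_le (Or.inr ⟨⟨0, hd⟩, hz _⟩)
    · refine le_csInf ⟨_, Or.inr ⟨⟨0, hd⟩, rfl⟩⟩ ?_
      rintro _ (⟨i, rfl⟩ | ⟨j, rfl⟩)
      · exact hθe i
      · exact (hz j).ge
  have he0 : (e : ℝ≥0∞) ≠ 0 := by exact_mod_cast (by omega : e ≠ 0)
  have hetop : (e : ℝ≥0∞) ≠ ⊤ := ENNReal.natCast_ne_top _
  refine ⟨K, inferInstance, inferInstance, φ, ⟨?_, ?_, hθ0, ?_⟩, ?_⟩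
  · intro s hs
    by_cases h0 : s = 0
    · simp [h0]
    have h1 : 1 ≤ adicOrder (mS k d S) s := by
      have h2 := (hψm s 1).1 (by rwa [pow_one])
      rw [hν s h0] at h2
      exact_mod_cast h2
    rw [← pow_one (tId K), mem_tId_pow, hφord s h0]
    exact_mod_cast Nat.mul_pos he h1
  · intro i
    rw [← pow_one (tId K), mem_tId_pow, coe_tOrd _ (hθ0 i)]
    exact_mod_cast he.trans (hθe i)
  · intro j h0
    have := hφz j
    rw [h0, PowerSeries.order_zero] at this
    exact ENat.top_ne_natCast _ this
  · rw [harc]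
    apply le_antisymm
    · refine le_sInf ?_
      rintro _ ⟨g, l, hg, hl, hgl, rfl⟩
      refine ENNReal.div_le_of_le_mul ?_
      refine sInf_le ⟨φ (algebraMap S (BRing P) g), l, hφ0 g hg, hl, ?_, ?_⟩
      · exact Algebra.subset_adjoin (Or.inr ⟨g, l, hgl, hφ0 g hg, rfl⟩)
      · change _ = (tOrd (φ (algebraMap S (BRing P) g)) : ℝ≥0∞) / _
        rw [hφt g hg]
        push_cast
        rw [div_eq_mul_inv, div_eq_mul_inv]; ring
    · rw [ENNReal.le_div_iff_mul_le (Or.inl he0) (Or.inl hetop)]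
      refine le_sInf ?_
      rintro _ ⟨f, n, hf, hn, hfn, rfl⟩
      have hle : contactAlg P D φ ≤ slopeAlg K (e * w) := by
        refine Algebra.adjoin_le ?_
        rintro _ (⟨i, rfl⟩ | ⟨g, l, hgl, hg0, rfl⟩)
        · have := (mem_slopeAlg (e * w) (φ (theta P i)) 1 (hθ0 i)).2 (by simpa using hθ i)
          simpa using this
        · refine (mem_slopeAlg (e * w) _ l hg0).2 (hwle g l ?_ hgl)
          rintro rfl
          exact hg0 (by simp)
      have h1 := (mem_slopeAlg _ f n hf).1 (hle hfn)
      have hn0 : (n : ℝ≥0∞) ≠ 0 := by exact_mod_cast (by omega : n ≠ 0)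
      rw [ENNReal.le_div_iff_mul_le (Or.inl hn0) (Or.inl (ENNReal.natCast_ne_top _))]
      have h2 := ENNReal.ofReal_le_ofReal h1
      rw [ENNReal.ofReal_mul (by positivity), ENNReal.ofReal_mul (Nat.cast_nonneg _),
        ENNReal.ofReal_natCast, ENNReal.ofReal_natCast, ENNReal.ofReal_natCast, hwω] at h2
      rw [mul_comm ω]
      exact h2

/-- (Theorem `thm:igualdad_gral`.)  There exist a field extension `K ⊇ k` and an arc
`φ : B → K⟦t⟧` in `X` through `ξ` such that `r_{X,φ} / ord(φ) = ord(G_X^{(d)})`. -/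
theorem exists_arc_normalized_contact_order_eq_elimination_order
    (k : Type) [Field k] [CharZero k] (d : ℕ) (hd : 1 ≤ d)
    (S : Type) [CommRing S] [IsDomain S] [Algebra (MvPolynomial (Fin d) k) S]
    [Algebra k S] [IsScalarTower k (MvPolynomial (Fin d) k) S] [IsSLoc k d S]
    (D : Fin d → Derivation k S S)
    (hD : ∀ i j : Fin d, D j (zvar k d S i) = if i = j then 1 else 0)
    (P : Presentation k d S) :
    ∃ (K : Type) (_ : Field K) (_ : Algebra k K)
      (φ : BRing P →ₐ[k] PowerSeries K), IsArc P φ ∧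
      rOrd P D φ / (arcOrd P φ : ℝ≥0∞) = reesOrder (mS k d S) (elimAlg P D) := by
  classical
  let K := AlgebraicClosure (FractionRing (MvPolynomial (Fin d) k))
  let a : Fin d → K := fun j => algebraMap (MvPolynomial (Fin d) k) K (MvPolynomial.X j)
  have ha0 : (MvPolynomial.aeval a : MvPolynomial (Fin d) k →ₐ[k] K) =
      IsScalarTower.toAlgHom k (MvPolynomial (Fin d) k) K := by
    apply MvPolynomial.algHom_ext
    intro j
    simp [a]
  have ha : Function.Injective (MvPolynomial.aeval a : MvPolynomial (Fin d) k →ₐ[k] K) := by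
    rw [ha0]
    change Function.Injective (algebraMap (MvPolynomial (Fin d) k) K)
    rw [IsScalarTower.algebraMap_eq _ (FractionRing (MvPolynomial (Fin d) k)) K]
    exact (algebraMap (FractionRing (MvPolynomial (Fin d) k)) K).injective.comp
      (IsFractionRing.injective _ _)
  have haj : ∀ j, a j ≠ 0 := by
    intro j hj
    have h1 : MvPolynomial.aeval a (MvPolynomial.X j : MvPolynomial (Fin d) k) = 0 := by
      rw [MvPolynomial.aeval_X, hj]
    exact MvPolynomial.X_ne_zero j ((map_eq_zero_iff _ ha).1 h1)
  have : CharZero K := charZero_of_injective_algebraMap (algebraMap k K).injective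
  exact exists_arc_of_generic k d hd S D P K a ha haj

end NashMult
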